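/- For every integer r ≥ 1 and all natural numbers m ≥ n ≥ 0, the number of ballot paths to (n,m) avoiding r consecutive E-steps satisfies (m+1) · s_n(m;r) = (m-n+1) · ⟨m+1 choose n⟩_r. -/

import Mathlib

/-- A word in steps `N = true` (up, `(0,1)`) and `E = false` (right, `(1,0)`) is a
ballot word when every prefix has at least as many `N`-steps as `E`-steps,
i.e. the corresponding lattice path from `(0,0)` stays weakly above `y = x`. -/
def IsBallot (p : List Bool) : Prop :=
  ∀ q : List Bool, q <+: p → q.count false ≤ q.count true

/-- `sCount r n m` is the number of ballot paths from `(0,0)` to `(n,m)`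
(with `n` east-steps and `m` north-steps, staying weakly above `y = x`)
containing no `r` consecutive east-steps. -/
noncomputable def sCount (r n m : ℕ) : ℕ :=
  Set.ncard {p : List Bool |
    p.count false = n ∧ p.count true = m ∧ IsBallot p ∧ ¬ List.replicate r false <:+: p}

/-- The Euler coefficient `⟨n choose k⟩_r`: the coefficient of `t^k` in the
polynomial `(1 + t + t^2 + ⋯ + t^(r-1))^n`, viewed as an integer. -/
noncomputable def eulerCoeff (r n k : ℕ) : ℤ :=
  ((∑ i ∈ Finset.range r, (Polynomial.X : Polynomial ℤ) ^ i) ^ n).coeff k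

/-!
Let `P = 1 + t + ⋯ + t ^ (r - 1)`. Removing the last block `N E^j` of a path, where `j < r`, shows
that for `n ≤ m + 1` the count `s_n(m + 1)` is the sum of the `s_{n-j}(m)` over `j < r`. The
coefficients `[t^n] P^m Q` satisfy the same recurrence, whatever the polynomial `Q`. For
`Q = P - t P'` the boundary values agree too: `t d/dt` multiplies the coefficient of `t^n` by `n`,
so `(m + 1) [t^n] P^m (P - t P') = (m + 1 - n) [t^n] P^(m+1)`, which vanishes at `n = m + 1` just
as `s_{m+1}(m)` does. Hence `s_n(m) = [t^n] P^m (P - t P')`.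
-/

section Polynomial

open Polynomial
open Finset.HasAntidiagonal (antidiagonal)

variable {R : Type*}

theorem coeff_X_mul_derivative [Semiring R] (P : R[X]) (n : ℕ) :
    (X * derivative P).coeff n = P.coeff n * n := by
  cases n with
  | zero => simp
  | succ n => simp [coeff_X_mul, coeff_derivative]

theorem succ_mul_coeff_pow_mul_sub_X_mul_derivative [CommRing R] (P : R[X]) (m n : ℕ) :
    (m + 1) * (P ^ m * (P - X * derivative P)).coeff n =
      (m + 1 - n) * (P ^ (m + 1)).coeff n := by
  have hpoly : C (m + 1 : R) * (P ^ m * (P - X * derivative P)) =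
      C (m + 1 : R) * P ^ (m + 1) - X * derivative (P ^ (m + 1)) := by
    rw [derivative_pow_succ]
    ring
  rw [← coeff_C_mul, hpoly, coeff_sub, coeff_C_mul, coeff_X_mul_derivative]
  ring

theorem coeff_succ_pow_mul_sub_X_mul_derivative [CommRing R] [NoZeroDivisors R] [CharZero R]
    (P : R[X]) (m : ℕ) : (P ^ m * (P - X * derivative P)).coeff (m + 1) = 0 := by
  have h := succ_mul_coeff_pow_mul_sub_X_mul_derivative P m (m + 1)
  rw [Nat.cast_succ, sub_self, zero_mul] at h
  exact (mul_eq_zero.mp h).resolve_left m.cast_add_one_ne_zero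

/-- The polynomial `1 + t + ⋯ + t ^ (r - 1)`, whose powers have the Euler coefficients as
coefficients. -/
noncomputable def eulerPoly (r : ℕ) : ℤ[X] :=
  ∑ i ∈ Finset.range r, X ^ i

theorem eulerCoeff_eq_coeff_eulerPoly_pow (r n k : ℕ) :
    eulerCoeff r n k = (eulerPoly r ^ n).coeff k :=
  rfl

theorem coeff_eulerPoly_mul (r : ℕ) (Q : ℤ[X]) (n : ℕ) :
    (eulerPoly r * Q).coeff n = ∑ x ∈ antidiagonal n with x.1 < r, Q.coeff x.2 := by
  simp [eulerPoly, coeff_mul, coeff_X_pow, Finset.sum_filter]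

end Polynomial

section List

variable {α : Type*} {a : α} {l p q p' q' : List α}

theorem append_cons_inj_of_notMem_right (hq : a ∉ q) (hq' : a ∉ q') :
    p ++ a :: q = p' ++ a :: q' ↔ p = p' ∧ q = q' := by
  simp only [List.append_eq_append_iff, List.cons_eq_append_iff, List.cons_eq_cons]
  grind

theorem exists_eq_append_cons_notMem_right (h : a ∈ l) : ∃ p q, l = p ++ a :: q ∧ a ∉ q := by
  obtain ⟨q, p, hl, hq⟩ := List.eq_append_cons_of_mem (List.mem_reverse.mpr h)
  exact ⟨p.reverse, q.reverse, by simpa using congrArg List.reverse hl, by simpa using hq⟩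

theorem infix_append_cons_iff_of_notMem (ha : a ∉ l) :
    l <:+: p ++ a :: q ↔ l <:+: p ∨ l <:+: q := by
  have hprefix {s : List α} (hs : a ∉ s) : s <+: a :: q ↔ s = [] := by
    rw [List.prefix_cons_iff]
    grind
  rw [List.infix_append_iff, List.infix_cons_iff, hprefix ha]
  constructor
  · rintro (hp | (rfl | hq) | ⟨s, t, rfl, hs, ht⟩)
    · exact .inl hp
    · exact .inl List.nil_infix
    · exact .inr hq
    · obtain rfl := (hprefix (by grind)).mp ht
      exact .inl (by simpa using hs.isInfix)
  · grind

end List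

/-- The path `p` followed by the block `N E^j`; every path containing an `N`-step is obtained in
exactly one way. -/
def appendBlock (p : List Bool) (j : ℕ) : List Bool :=
  p ++ true :: List.replicate j false

theorem appendBlock_inj {p p' : List Bool} {j j' : ℕ} :
    appendBlock p j = appendBlock p' j' ↔ p = p' ∧ j = j' := by
  unfold appendBlock
  rw [append_cons_inj_of_notMem_right (by simp) (by simp)]
  simp

theorem exists_appendBlock_eq {p : List Bool} (h : true ∈ p) : ∃ q j, appendBlock q j = p := by
  obtain ⟨q, s, rfl, hs⟩ := exists_eq_append_cons_notMem_right h
  refine ⟨q, s.length, ?_⟩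
  rw [appendBlock, ← List.eq_replicate_of_mem fun b hb ↦ ?_]
  exact Bool.eq_false_iff.mpr fun hb' ↦ hs (hb' ▸ hb)

theorem count_false_appendBlock (p : List Bool) (j : ℕ) :
    (appendBlock p j).count false = p.count false + j := by
  simp [appendBlock]

theorem count_true_appendBlock (p : List Bool) (j : ℕ) :
    (appendBlock p j).count true = p.count true + 1 := by
  simp [appendBlock, List.count_replicate]

theorem replicate_false_infix_appendBlock {r j : ℕ} {p : List Bool} :
    List.replicate r false <:+: appendBlock p j ↔ List.replicate r false <:+: p ∨ r ≤ j := by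
  rw [appendBlock, infix_append_cons_iff_of_notMem (by simp)]
  simp [List.infix_replicate_iff]

theorem IsBallot.count_le {p : List Bool} (hp : IsBallot p) : p.count false ≤ p.count true :=
  hp p List.prefix_rfl

theorem isBallot_nil : IsBallot [] := by
  simp [IsBallot]

theorem isBallot_concat_iff {p : List Bool} {b : Bool} :
    IsBallot (p ++ [b]) ↔ IsBallot p ∧ (p ++ [b]).count false ≤ (p ++ [b]).count true := by
  simp only [IsBallot, List.prefix_concat_iff, or_imp, forall_and, forall_eq, and_comm]

theorem isBallot_appendBlock_iff {p : List Bool} {j : ℕ} :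
    IsBallot (appendBlock p j) ↔ IsBallot p ∧ p.count false + j ≤ p.count true + 1 := by
  induction j with
  | zero => simp [appendBlock, isBallot_concat_iff]
  | succ j ih =>
    have hconcat : appendBlock p (j + 1) = appendBlock p j ++ [false] := by
      simp [appendBlock, List.replicate_succ']
    rw [hconcat, isBallot_concat_iff, ih, ← hconcat, count_false_appendBlock,
      count_true_appendBlock]
    grind

/-- The finite set of paths counted by `sCount r n m`. -/
noncomputable def ballotPaths (r n m : ℕ) : Finset (List Bool) :=
  Set.Finite.toFinset (s := {p : List Bool |
    p.count false = n ∧ p.count true = m ∧ IsBallot p ∧ ¬ List.replicate r false <:+: p}) <|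
  (List.finite_length_eq Bool (n + m)).subset fun p ⟨hn, hm, _⟩ ↦ by
    rw [Set.mem_ofPred_eq, ← List.count_false_add_count_true p, hn, hm]

theorem mem_ballotPaths {r n m : ℕ} {p : List Bool} :
    p ∈ ballotPaths r n m ↔
      p.count false = n ∧ p.count true = m ∧ IsBallot p ∧ ¬ List.replicate r false <:+: p := by
  simp [ballotPaths]

theorem sCount_eq_card_ballotPaths (r n m : ℕ) : sCount r n m = (ballotPaths r n m).card :=
  Set.ncard_eq_toFinset_card _ _

theorem appendBlock_mem_ballotPaths_succ {r n m j : ℕ} {p : List Bool} :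
    appendBlock p j ∈ ballotPaths r n (m + 1) ↔
      j < r ∧ n ≤ m + 1 ∧ ∃ k, j + k = n ∧ p ∈ ballotPaths r k m := by
  simp only [mem_ballotPaths, count_false_appendBlock, count_true_appendBlock,
    isBallot_appendBlock_iff, replicate_false_infix_appendBlock]
  grind

open Finset.HasAntidiagonal (antidiagonal) in
theorem sCount_succ (r : ℕ) {n m : ℕ} (h : n ≤ m + 1) :
    sCount r n (m + 1) = ∑ x ∈ antidiagonal n with x.1 < r, sCount r x.2 m := by
  simp only [sCount_eq_card_ballotPaths]
  rw [← Finset.card_sigma]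
  refine (Finset.card_nbij (fun x ↦ appendBlock x.2 x.1.1) ?mapsTo ?injOn ?surjOn).symm
  case mapsTo =>
    rintro ⟨⟨j, k⟩, p⟩ hx
    obtain ⟨⟨hjk, hj⟩, hp⟩ : (j + k = n ∧ j < r) ∧ p ∈ ballotPaths r k m := by simpa using hx
    exact appendBlock_mem_ballotPaths_succ.mpr ⟨hj, h, k, hjk, hp⟩
  case injOn =>
    rintro ⟨⟨j, k⟩, p⟩ hx ⟨⟨j', k'⟩, p'⟩ hx' heq
    obtain ⟨rfl, rfl⟩ := appendBlock_inj.mp heq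
    have hk : j + k = n := by simp_all
    have hk' : j + k' = n := by simp_all
    obtain rfl : k = k' := by lia
    rfl
  case surjOn =>
    intro p hp
    have htrue : true ∈ p := by
      rw [← List.count_pos_iff, (mem_ballotPaths.mp hp).2.1]
      exact m.succ_pos
    obtain ⟨q, j, rfl⟩ := exists_appendBlock_eq htrue
    obtain ⟨hj, -, k, hjk, hq⟩ := appendBlock_mem_ballotPaths_succ.mp hp
    exact ⟨⟨(j, k), q⟩, by simp [*], rfl⟩

theorem sCount_eq_zero_of_lt (r : ℕ) {n m : ℕ} (h : m < n) : sCount r n m = 0 := by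
  rw [sCount_eq_card_ballotPaths, Finset.card_eq_zero, Finset.eq_empty_iff_forall_notMem]
  intro p hp
  obtain ⟨rfl, rfl, hballot, -⟩ := mem_ballotPaths.mp hp
  exact h.not_ge hballot.count_le

theorem sCount_zero_zero {r : ℕ} (hr : 1 ≤ r) : sCount r 0 0 = 1 := by
  rw [sCount_eq_card_ballotPaths, Finset.card_eq_one]
  refine ⟨[], ?_⟩
  ext p
  rw [mem_ballotPaths, Finset.mem_singleton]
  constructor
  · rintro ⟨hfalse, htrue, -⟩
    rw [← List.length_eq_zero_iff, ← List.count_false_add_count_true, hfalse, htrue]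
  · rintro rfl
    simp [isBallot_nil, Nat.one_le_iff_ne_zero.mp hr]

open Polynomial in
theorem sCount_eq_coeff {r : ℕ} (hr : 1 ≤ r) {n m : ℕ} (h : n ≤ m + 1) :
    (sCount r n m : ℤ) =
      (eulerPoly r ^ m * (eulerPoly r - X * derivative (eulerPoly r))).coeff n := by
  induction m generalizing n with
  | zero =>
    obtain rfl | rfl : n = 0 ∨ n = 1 := by lia
    · simp [sCount_zero_zero hr, eulerPoly, coeff_X_pow, Nat.one_le_iff_ne_zero.mp hr]
    · rw [sCount_eq_zero_of_lt r zero_lt_one,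
        coeff_succ_pow_mul_sub_X_mul_derivative, Nat.cast_zero]
  | succ m ih =>
    obtain rfl | hn : n = m + 2 ∨ n ≤ m + 1 := by lia
    · rw [sCount_eq_zero_of_lt r (Nat.lt_succ_self _),
        coeff_succ_pow_mul_sub_X_mul_derivative, Nat.cast_zero]
    · rw [sCount_succ r hn, pow_succ', mul_assoc, coeff_eulerPoly_mul, Nat.cast_sum]
      refine Finset.sum_congr rfl fun x hx ↦ ih ?_
      exact (Finset.HasAntidiagonal.antidiagonal.snd_le (Finset.mem_of_mem_filter x hx)).trans hn

theorem sCount_eq_euler (r : ℕ) (hr : 1 ≤ r) (n m : ℕ) (h : n ≤ m) :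
    ((m : ℤ) + 1) * sCount r n m = ((m : ℤ) - n + 1) * eulerCoeff r (m + 1) n := by
  rw [sCount_eq_coeff hr (h.trans m.le_succ), succ_mul_coeff_pow_mul_sub_X_mul_derivative,
    eulerCoeff_eq_coeff_eulerPoly_pow, sub_add_eq_add_sub]
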